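/- The localization E_Δ = 𝔽_p[[X_1,...,X_d]][1/(X_1⋯X_d)] is a noetherian ring of finite global dimension, and every finitely generated projective module over E_Δ is stably free (i.e. K_0(E_Δ) ≅ ℤ). -/

import Mathlib

/-!
Write `R = 𝔽_p[[X_1,…,X_d]]`, a noetherian local ring, and `E` for its localization at the powers
of `X_1⋯X_d`. Everything follows from one fact, `finPD_mvPowerSeries`: finitely generated
`R`-modules have projective dimension at most `d`.

*Finite projective dimension over `R`.* By induction on `d`, it is enough to pass from a noetherian
local ring `A` to `A[[X]]`, that is, from `B ⧸ x` to `B` for a regular element `x` in the maximal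
ideal of a noetherian local ring `B` (`FinPD.of_quotient`). If `K` is the first syzygy of a finitely
generated `B`-module, then `x` is regular on `K`, so `pd_B (K/xK) = pd_B K + 1`. As
`pd_B (K/xK) ≤ pd_{B/x} (K/xK) + 1` (`hasPD_restrict`), one gets `pd_B K ≤ pd_{B/x} (K/xK)`.

*Localization.* Every finitely generated module over a localization of `R` is the localization of a
finitely generated `R`-module, and localization does not raise the projective dimension
(`FinPD.localization`). By Baer's criterion and dimension shifting, a bound on the projective
dimension of the cyclic modules bounds the injective dimension of every module
(`hasInjectiveDimensionLE_of_ideal`); so `E` has global dimension at most `d`.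

*Stable freeness.* Let `M` be a finitely generated projective `E`-module and `N` a finitely
generated `R`-module localizing to `M`. Localizing a surjection `R^m → N` with kernel `K` gives a
split sequence, so `E^m ≃ E ⊗ K × M` with `E ⊗ K` projective. Induction on `pd_R N` reduces to
projective `N`, which is free because `R` is local.
-/

open CategoryTheory

/-- The `n`-th Ext group `Ext^n_R(M, N)` of two `R`-modules, as an `R`-module. -/
noncomputable def ExtGrp (R : Type) [CommRing R] (n : ℕ) (M N : ModuleCat R) : ModuleCat R :=
  ((Ext R (ModuleCat R) n).obj (Opposite.op M)).obj N

/-- `R` has global dimension at most `n`, i.e. `Ext^{n+1}(M, N) = 0` for all `M`, `N`. -/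
def GlobalDimLE (R : Type) [CommRing R] (n : ℕ) : Prop :=
  ∀ M N : ModuleCat R, Subsingleton (ExtGrp R (n + 1) M N)

/-! ### Regular power series rings -/

/-- Every finitely generated `R`-module has projective dimension at most `n`. Only modules in the
universe of `R` are considered. -/
def FinPD (R : Type) [CommRing R] (n : ℕ) : Prop :=
  ∀ M : ModuleCat.{0} R, Module.Finite R M → HasProjectiveDimensionLE M n

lemma FinPD.of_ringEquiv {R S : Type} [CommRing R] [CommRing S] (e : R ≃+* S) {n : ℕ}
    (h : FinPD R n) : FinPD S n := by
  intro M hM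
  let : Module R M := Module.compHom M e.toRingHom
  have := RingHomInvPair.of_ringEquiv e
  have := RingHomInvPair.symm (e : R →+* S) (e.symm : S →+* R)
  let e' : ModuleCat.of R M ≃ₛₗ[RingHomClass.toRingHom e] M :=
    { __ := AddEquiv.refl M
      map_smul' _ _ := rfl }
  have : Module.Finite R (ModuleCat.of R M) :=
    Module.Finite.of_surjective e'.symm.toLinearMap e'.symm.surjective
  have := h (ModuleCat.of R M) this
  exact ModuleCat.hasProjectiveDimensionLE_of_semiLinearEquiv e e' n

lemma finPD_field (k : Type) [Field k] : FinPD k 0 := by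
  intro M _
  rw [← projective_iff_hasProjectiveDimensionLE_zero, ← IsProjective.iff_projective]
  have : Module.Free k M := Module.Free.of_divisionRing k M
  exact Module.Projective.of_free

section Restrict

variable {R S : Type} [CommRing R] [CommRing S] [Algebra R S] {x : R}

/-- A free module over `S = R ⧸ x`, with `x` regular, has the free resolution of length one given by
multiplication by `x`. The quotient `S` is given by a surjective algebra map with kernel `(x)`. -/
lemma hasPD_finsupp (hx : IsSMulRegular R x)
    (hsurj : Function.Surjective (algebraMap R S))
    (hker : ∀ r : R, algebraMap R S r = 0 ↔ x ∣ r) (ι : Type) :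
    HasProjectiveDimensionLE (ModuleCat.of R (ι →₀ S)) 1 := by
  let f : (ι →₀ R) →ₗ[R] (ι →₀ R) := LinearMap.lsmul R _ x
  let g : (ι →₀ R) →ₗ[R] (ι →₀ S) := Finsupp.mapRange.linearMap (Algebra.linearMap R S)
  have hf : Function.Injective f := by
    intro a b hab
    ext i
    exact hx (by simpa [f] using DFunLike.congr_fun hab i)
  have hg : Function.Surjective g := Finsupp.mapRange_surjective _ (map_zero _) hsurj
  have hfg : Function.Exact f g := by
    intro v
    constructor
    · intro hv
      have hv' (i : ι) : x ∣ v i := by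
        rw [← hker]
        simpa [g] using DFunLike.congr_fun hv i
      -- The quotient by `x` is chosen to be `0` at `0`, so that it preserves finite supports.
      have hc (r : R) : ∃ c : R, (x ∣ r → x * c = r) ∧ (r = 0 → c = 0) := by
        by_cases hr : r = 0
        · exact ⟨0, by simp [hr], by simp⟩
        by_cases h : x ∣ r
        · obtain ⟨c, rfl⟩ := h
          exact ⟨c, by simp, fun h ↦ absurd h hr⟩
        · exact ⟨0, by simp [h], by simp⟩
      choose c hc hc0 using hc
      refine ⟨v.mapRange c (hc0 0 rfl), ?_⟩
      ext i
      simpa [f] using hc _ (hv' i)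
    · rintro ⟨w, rfl⟩
      ext i
      change algebraMap R S (x * w i) = 0
      rw [map_mul, (hker x).2 dvd_rfl, zero_mul]
  let T : ShortComplex (ModuleCat.{0} R) :=
    ModuleCat.shortComplexOfCompEqZero f g hfg.linearMap_comp_eq_zero
  have hT : T.ShortExact := ModuleCat.shortComplex_shortExact T hfg hf hg
  have h1 : Projective T.X₁ := ModuleCat.projective_of_categoryTheory_projective _
  have h2 : Projective T.X₂ := ModuleCat.projective_of_categoryTheory_projective _
  exact (hT.hasProjectiveDimensionLT_X₃_iff 0 h2).2 inferInstance

/-- Change of rings: `pd_R N ≤ pd_S N + 1` for `S = R ⧸ x` with `x` regular. -/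
lemma hasPD_restrict (hx : IsSMulRegular R x)
    (hsurj : Function.Surjective (algebraMap R S))
    (hker : ∀ r : R, algebraMap R S r = 0 ↔ x ∣ r) (n : ℕ) (N : Type) [AddCommGroup N]
    [Module R N] [Module S N] [IsScalarTower R S N]
    (hN : HasProjectiveDimensionLE (ModuleCat.of S N) n) :
    HasProjectiveDimensionLE (ModuleCat.of R N) (n + 1) := by
  induction n generalizing N with
  | zero =>
    rw [← projective_iff_hasProjectiveDimensionLE_zero, ← IsProjective.iff_projective] at hN
    obtain ⟨s, hs⟩ := Module.projective_def'.1 hN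
    have := hasPD_finsupp hx hsurj hker N
    let r : Retract (ModuleCat.of R N) (ModuleCat.of R (N →₀ S)) :=
      { i := ModuleCat.ofHom (s.restrictScalars R)
        r := ModuleCat.ofHom ((Finsupp.linearCombination S (id : N → N)).restrictScalars R)
        retract := by
          ext y
          exact LinearMap.congr_fun hs y }
    exact r.hasProjectiveDimensionLT 2
  | succ n ih =>
    let g : (N →₀ S) →ₗ[S] N := Finsupp.linearCombination S (id : N → N)
    have hg : Function.Surjective g := Finsupp.linearCombination_id_surjective S N
    have hT := LinearMap.shortExact_shortComplexKer hg
    have h2 : Projective (ModuleCat.of S (N →₀ S)) :=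
      ModuleCat.projective_of_categoryTheory_projective _
    have h1 := (hT.hasProjectiveDimensionLT_X₃_iff n h2).1 hN
    have h1' := ih (LinearMap.ker g) h1
    have hg' : Function.Surjective (g.restrictScalars R) := hg
    have hT' := LinearMap.shortExact_shortComplexKer hg'
    have h2' := hasPD_finsupp hx hsurj hker N
    exact hT'.hasProjectiveDimensionLT_X₃ (n + 2) h1'
      (hasProjectiveDimensionLT_of_ge _ 2 (n + 3) (by lia))

end Restrict

/-- A noetherian local ring inherits a bound on projective dimensions, raised by one, from its
quotient by a regular element of the maximal ideal. -/
lemma FinPD.of_quotient {R : Type} [CommRing R] [IsLocalRing R] [IsNoetherianRing R] {x : R}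
    (hx : IsSMulRegular R x) (hmem : x ∈ IsLocalRing.maximalIdeal R) {n : ℕ}
    (h : FinPD (R ⧸ Ideal.span {x}) n) : FinPD R (n + 1) := by
  intro M hM
  obtain ⟨P, _, _, _, _, f, hf⟩ := Module.exists_finite_presentation R M
  have hT := LinearMap.shortExact_shortComplexKer hf
  have h2 : Projective (ModuleCat.of R P) := ModuleCat.projective_of_categoryTheory_projective _
  refine (hT.hasProjectiveDimensionLT_X₃_iff n h2).2 ?_
  change HasProjectiveDimensionLE (ModuleCat.of R (LinearMap.ker f)) n
  -- The syzygy sits in a free module, so `x` is regular on it even if it is not on `M`.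
  have hreg : IsSMulRegular (LinearMap.ker f) x := by
    have hP : IsSMulRegular P x := by
      let b := Module.Free.chooseBasis R P
      intro y z hyz
      apply b.repr.injective
      ext i
      apply hx
      simpa using congrArg (fun t ↦ b.repr t i) hyz
    intro y z hyz
    exact Subtype.ext (hP (congrArg Subtype.val hyz))
  have key := ModuleCat.projectiveDimension_quotSMulTop_eq_succ_of_isSMulRegular
    (ModuleCat.of R (LinearMap.ker f)) x hreg hmem
  have htors : Module.IsTorsionBySet R (QuotSMulTop x (LinearMap.ker f)) (Ideal.span {x}) := by
    rw [Module.isTorsionBySet_span_singleton_iff]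
    intro y
    have := QuotSMulTop.mem_annihilator (LinearMap.ker f) x
    exact Module.mem_annihilator.1 this y
  let := htors.module
  have hfin : Module.Finite (R ⧸ Ideal.span {x}) (QuotSMulTop x (LinearMap.ker f)) :=
    Module.Finite.of_restrictScalars_finite R _ _
  have h3 := hasPD_restrict (S := R ⧸ Ideal.span {x}) hx Ideal.Quotient.mk_surjective
    (fun r ↦ by
      rw [Ideal.Quotient.algebraMap_eq, Ideal.Quotient.eq_zero_iff_mem,
        Ideal.mem_span_singleton]) n _
    (h (ModuleCat.of _ (QuotSMulTop x (LinearMap.ker f))) hfin)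
  rw [← projectiveDimension_le_iff] at h3 ⊢
  have h4 := key ▸ h3
  rw [Nat.cast_add] at h4
  exact ENat.WithBot.add_le_add_one_right_iff.1 (by simpa using h4)

lemma finPD_powerSeries (A : Type) [CommRing A] [IsLocalRing A] [IsNoetherianRing A] {n : ℕ}
    (h : FinPD A n) : FinPD (PowerSeries A) (n + 1) := by
  have hker : RingHom.ker (PowerSeries.constantCoeff (R := A)) = Ideal.span {PowerSeries.X} := by
    ext r
    rw [RingHom.mem_ker, Ideal.mem_span_singleton, PowerSeries.X_dvd_iff]
  let e : (PowerSeries A ⧸ Ideal.span {(PowerSeries.X : PowerSeries A)}) ≃+* A :=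
    (Ideal.quotEquivOfEq hker.symm).trans
      (RingHom.quotientKerEquivOfSurjective PowerSeries.constantCoeff_surj)
  refine FinPD.of_quotient (x := PowerSeries.X) ?_ ?_ (h.of_ringEquiv e.symm)
  · intro a b hab
    exact PowerSeries.X_mul_cancel hab
  · rw [IsLocalRing.mem_maximalIdeal, mem_nonunits_iff, PowerSeries.isUnit_iff_constantCoeff]
    simp

lemma finPD_mvPowerSeries (k : Type) [Field k] (d : ℕ) : FinPD (MvPowerSeries (Fin d) k) d := by
  induction d with
  | zero =>
    exact (finPD_field k).of_ringEquiv (MvPowerSeries.isEmptyEquiv (Fin 0) k).toRingEquiv.symm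
  | succ d ih =>
    exact (finPD_powerSeries _ ih).of_ringEquiv (MvPowerSeries.finSuccEquiv k d).toRingEquiv.symm

/-! ### Global dimension and localization -/

/-- Both constructions of Ext are computed by a projective resolution of `M`: the derived-functor
group `ExtGrp` vanishes as soon as `Abelian.Ext` does. -/
lemma subsingleton_extGrp {R : Type} [CommRing R] (n : ℕ) (M N : ModuleCat.{0} R)
    (h : Subsingleton (Abelian.Ext.{0} M N (n + 1))) : Subsingleton (ExtGrp R (n + 1) M N) := by
  let P := ProjectiveResolution.of M
  rw [← ModuleCat.isZero_iff_subsingleton]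
  refine Limits.IsZero.of_iso ?_ (P.isoExt (R := R) (n + 1) N)
  rw [← HomologicalComplex.exactAt_iff_isZero_homology,
    HomologicalComplex.exactAt_iff' _ n (n + 1) (n + 2) (by simp) (by simp),
    ShortComplex.moduleCat_exact_iff]
  intro f hf
  change P.complex.X (n + 1) ⟶ N at f
  have hf' : P.complex.d (n + 2) (n + 1) ≫ f = 0 := hf
  obtain ⟨g, hg⟩ := (P.extMk_eq_zero_iff f (n + 2) rfl hf' n rfl).1 (Subsingleton.elim _ _)
  exact ⟨g, hg⟩

/-- Baer's criterion in higher degrees: injective dimension is detected by cyclic modules. -/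
lemma hasInjectiveDimensionLE_of_ideal {R : Type} [CommRing R] (n : ℕ) (N : ModuleCat.{0} R)
    (h : ∀ I : Ideal R, Subsingleton (Abelian.Ext.{0} (ModuleCat.of R (R ⧸ I)) N (n + 1))) :
    HasInjectiveDimensionLE N n := by
  induction n generalizing N with
  | zero =>
    change HasInjectiveDimensionLT N 1
    rw [← injective_iff_hasInjectiveDimensionLT_one, ← Module.injective_iff_injective_object R N]
    apply Module.Baer.injective
    intro I g
    let T : ShortComplex (ModuleCat.{0} R) :=
      ModuleCat.shortComplexOfCompEqZero I.subtype I.mkQ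
        (LinearMap.exact_subtype_mkQ I).linearMap_comp_eq_zero
    have hT : T.ShortExact := ModuleCat.shortComplex_shortExact T
      (LinearMap.exact_subtype_mkQ I) Subtype.val_injective I.mkQ_surjective
    obtain ⟨e, he⟩ := Abelian.Ext.contravariant_sequence_exact₁ hT N
      (Abelian.Ext.mk₀ (ModuleCat.ofHom g)) (show 1 + 0 = 1 by rfl)
      (@Subsingleton.elim _ (h I) _ _)
    obtain ⟨e, rfl⟩ := (Abelian.Ext.mk₀_bijective _ _).2 e
    rw [Abelian.Ext.mk₀_comp_mk₀, (Abelian.Ext.mk₀_bijective _ _).1.eq_iff] at he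
    refine ⟨e.hom, fun y hy ↦ ?_⟩
    exact congrArg (fun t ↦ t.hom ⟨y, hy⟩) he
  | succ n ih =>
    obtain ⟨J⟩ := EnoughInjectives.presentation N
    have hT : (ShortComplex.mk _ _ (Limits.cokernel.condition J.f)).ShortExact :=
      { exact := ShortComplex.exact_cokernel J.f }
    have hJ : Injective J.J := inferInstance
    refine (hT.hasInjectiveDimensionLT_X₃_iff n hJ).1 (ih _ fun I ↦ ⟨fun a b ↦ ?_⟩)
    rw [← sub_eq_zero]
    obtain ⟨y, hy⟩ := Abelian.Ext.covariant_sequence_exact₃ _ hT (a - b) rfl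
      (@Subsingleton.elim _ (h I) _ _)
    rw [← hy, Abelian.Ext.eq_zero_of_injective y, Abelian.Ext.zero_comp]

/-- Auslander: a bound on the projective dimension of finitely generated modules bounds the global
dimension. -/
lemma FinPD.globalDimLE {R : Type} [CommRing R] {n : ℕ} (h : FinPD R n) : GlobalDimLE R n := by
  intro M N
  apply subsingleton_extGrp
  have : HasInjectiveDimensionLE N n := hasInjectiveDimensionLE_of_ideal n N fun I ↦ by
    have := h (ModuleCat.of R (R ⧸ I)) inferInstance
    exact HasProjectiveDimensionLT.subsingleton _ (n + 1) _ le_rfl N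
  exact HasInjectiveDimensionLT.subsingleton _ (n + 1) _ le_rfl M

section Loc
variable {R : Type} [CommRing R] (p : Submonoid R)

/-- A finitely generated module over the localization is the localization of the `R`-span of any
finite set of generators. -/
lemma exists_isLocalizedModule (M : Type) [AddCommGroup M] [Module (Localization p) M]
    [Module R M] [IsScalarTower R (Localization p) M] [Module.Finite (Localization p) M] :
    ∃ (N : Submodule R M), Module.Finite R N ∧ IsLocalizedModule p N.subtype := by
  obtain ⟨s, hs⟩ := Module.Finite.fg_top (R := Localization p) (M := M)
  refine ⟨Submodule.span R s, Module.Finite.span_of_finite R s.finite_toSet, ?_, ?_, ?_⟩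
  · intro r
    rw [Module.End.isUnit_iff]
    exact (Module.End.isUnit_iff _).1 <| by
      have := (IsLocalization.map_units (Localization p) r).map
        (algebraMap (Localization p) (Module.End (Localization p) M))
      have h2 := (Module.End.isUnit_iff _).1 this
      rw [Module.End.isUnit_iff]
      convert h2 using 1
      ext y
      simp
  · intro y
    have hy : y ∈ Submodule.span (Localization p) (s : Set M) := hs ▸ trivial
    suffices ∃ t : p, t • y ∈ Submodule.span R (s : Set M) by
      obtain ⟨t, ht⟩ := this
      exact ⟨(⟨_, ht⟩, t), rfl⟩
    induction hy using Submodule.span_induction with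
    | mem y hy => exact ⟨1, by simpa using Submodule.subset_span hy⟩
    | zero => exact ⟨1, by simp⟩
    | add y z _ _ hy hz =>
      obtain ⟨a, ha⟩ := hy
      obtain ⟨b, hb⟩ := hz
      refine ⟨a * b, ?_⟩
      rw [smul_add]
      refine add_mem ?_ ?_
      · rw [mul_comm, mul_smul]; exact Submodule.smul_mem _ (b : R) ha
      · rw [mul_smul]; exact Submodule.smul_mem _ (a : R) hb
    | smul e y _ hy =>
      obtain ⟨a, ha⟩ := hy
      obtain ⟨⟨r, b⟩, hb⟩ := IsLocalization.surj p e
      refine ⟨a * b, ?_⟩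
      have : (a * b) • e • y = r • a • y := by
        have h1 : (b : R) • e • y = r • y := by
          rw [← IsScalarTower.algebraMap_smul (Localization p) (b : R), smul_smul, mul_comm, hb,
            IsScalarTower.algebraMap_smul]
        rw [mul_smul]
        change (a : R) • (b : R) • e • y = r • (a : R) • y
        rw [h1, smul_comm]
      rw [this]
      exact Submodule.smul_mem _ r ha
  · intro y z hyz
    exact ⟨1, by simpa using Subtype.ext hyz⟩

lemma FinPD.localization [IsNoetherianRing R] {n : ℕ} (h : FinPD R n) :
    FinPD (Localization p) n := by
  intro M hM
  let _ : Module R M := Module.compHom M (algebraMap R (Localization p))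
  have : IsScalarTower R (Localization p) M := IsScalarTower.of_algebraMap_smul fun _ _ ↦ rfl
  obtain ⟨N, hN, hl⟩ := exists_isLocalizedModule p M
  have := h (ModuleCat.of R N) hN
  have := ModuleCat.localizedModule_hasProjectiveDimensionLE n p (ModuleCat.of R N)
  have := ModuleCat.localizedModule_isLocalizedModule (ModuleCat.of R N) p
  let e : (ModuleCat.of R N).localizedModule p ≃ₗ[Localization p] M :=
    LinearEquiv.extendScalarsOfIsLocalization p (Localization p)
      (IsLocalizedModule.linearEquiv p ((ModuleCat.of R N).localizedModuleMkLinearMap p) N.subtype)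
  exact ModuleCat.hasProjectiveDimensionLE_of_linearEquiv e n

/-! ### Stable freeness -/

/-- If a projective module `M` over the localization of a noetherian local ring `R` comes from a
finitely generated `R`-module `N` of finite projective dimension, then `M` is stably free: split off
the localizations of successive syzygies of `N`. -/
lemma stablyFree_of_hasProjectiveDimensionLE [IsNoetherianRing R] [IsLocalRing R] (n : ℕ)
    (N M : Type) [AddCommGroup N] [Module R N]
    [Module.Finite R N] [AddCommGroup M] [Module R M] [Module (Localization p) M]
    [IsScalarTower R (Localization p) M] (f : N →ₗ[R] M) [IsLocalizedModule p f]
    [Module.Projective (Localization p) M]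
    (h : HasProjectiveDimensionLE (ModuleCat.of R N) n) :
    ∃ a b : ℕ, Nonempty ((M × (Fin a → Localization p)) ≃ₗ[Localization p]
      (Fin b → Localization p)) := by
  induction n generalizing N M with
  | zero =>
    rw [← projective_iff_hasProjectiveDimensionLE_zero, ← IsProjective.iff_projective] at h
    have : Module.Projective R N := h
    have : Module.Free R N := Module.free_of_flat_of_isLocalRing
    have := Module.free_of_isLocalizedModule (Rₛ := Localization p) p f
    have : Module.Finite (Localization p) M := Module.Finite.of_isLocalizedModule p f
    let b := (Module.Free.chooseBasis (Localization p) M).reindex (Fintype.equivFin _)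
    exact ⟨0, _, ⟨LinearEquiv.prodUnique.trans b.equivFun⟩⟩
  | succ n ih =>
    obtain ⟨m, g, hg⟩ := Module.Finite.exists_fin' R N
    have hT := LinearMap.shortExact_shortComplexKer hg
    have h2 : Projective (ModuleCat.of R (Fin m → R)) :=
      ModuleCat.projective_of_categoryTheory_projective _
    have h1 : HasProjectiveDimensionLE (ModuleCat.of R (LinearMap.ker g)) n :=
      (hT.hasProjectiveDimensionLT_X₃_iff n h2).1 h
    let q : (Fin m → R) →ₗ[R] (Fin m → Localization p) :=
      LinearMap.pi fun i ↦ Algebra.linearMap R (Localization p) ∘ₗ LinearMap.proj i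
    have hq : IsLocalizedModule p q := IsLocalizedModule.pi p _
    let G : (Fin m → Localization p) →ₗ[Localization p] M :=
      LinearMap.extendScalarsOfIsLocalization p (Localization p) (IsLocalizedModule.map p q f g)
    have hG : Function.Surjective G := IsLocalizedModule.map_surjective p q f g hg
    obtain ⟨s, hs⟩ := Module.projective_lifting_property G LinearMap.id hG
    let e0 : (LinearMap.ker G × M) ≃ₗ[Localization p] (Fin m → Localization p) :=
      lequivProdOfRightSplitExact (j := (LinearMap.ker G).subtype) (g := G) (f := s)
        Subtype.val_injective (Submodule.range_subtype _) hs
    have : Module.Projective (Localization p) (LinearMap.ker G × M) :=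
      Module.Projective.of_equiv e0.symm
    have : Module.Projective (Localization p) (LinearMap.ker G) :=
      Module.Projective.of_split (LinearMap.inl _ _ M) (LinearMap.fst _ _ M) rfl
    let c : Submodule.localized' (Localization p) p q (LinearMap.ker g) ≃ₗ[Localization p]
        LinearMap.ker G :=
      LinearEquiv.ofEq _ _ (LinearMap.localized'_ker_eq_ker_localizedMap _ p q f g)
    -- Localization commutes with kernels: `ker g → ker G` is a localization map.
    let κ : LinearMap.ker g →ₗ[R] LinearMap.ker G :=
      (c.restrictScalars R).toLinearMap ∘ₗ
        Submodule.toLocalized' (Localization p) p q (LinearMap.ker g)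
    have : IsLocalizedModule p κ := IsLocalizedModule.of_linearEquiv p _ (c.restrictScalars R)
    obtain ⟨a, b, ⟨e⟩⟩ := ih (LinearMap.ker g) (LinearMap.ker G) κ h1
    let sum (i j : ℕ) : ((Fin i → Localization p) × (Fin j → Localization p)) ≃ₗ[Localization p]
        (Fin (i + j) → Localization p) :=
      (LinearEquiv.sumArrowLequivProdArrow _ _ _ _).symm ≪≫ₗ
        LinearEquiv.funCongrLeft _ _ finSumFinEquiv.symm
    -- `M × E^b ≃ M × (ker G × E^a) ≃ (ker G × M) × E^a ≃ E^m × E^a`.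
    refine ⟨b, m + a, ⟨?_⟩⟩
    exact (LinearEquiv.refl _ M).prodCongr e.symm ≪≫ₗ
      (LinearEquiv.prodAssoc _ _ _ _).symm ≪≫ₗ
      (LinearEquiv.prodComm _ M (LinearMap.ker G) ≪≫ₗ e0).prodCongr (LinearEquiv.refl _ _) ≪≫ₗ
      sum m a
end Loc

/-- The localization `E_Δ = 𝔽_p[[X_1,…,X_d]][1/(X_1⋯X_d)]` is a noetherian
ring of finite global dimension, and every finitely generated projective module over `E_Δ` is
stably free (i.e. `K_0(E_Δ) ≅ ℤ`). -/
theorem statement_1 (p d : ℕ) [Fact p.Prime] (hd : 1 ≤ d) :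
    letI R := MvPowerSeries (Fin d) (ZMod p)
    letI XΔ : R := ∏ i : Fin d, MvPowerSeries.X i
    letI E := Localization.Away XΔ
    IsNoetherianRing E ∧
    (∃ n : ℕ, GlobalDimLE E n) ∧
    (∀ (M : Type) [AddCommGroup M] [Module E M],
      Module.Finite E M → Module.Projective E M →
      ∃ (n m : ℕ), Nonempty ((M × (Fin n → E)) ≃ₗ[E] (Fin m → E))) := by
  let R := MvPowerSeries (Fin d) (ZMod p)
  let S : Submonoid R := Submonoid.powers (∏ i : Fin d, MvPowerSeries.X i)
  have hR : FinPD R d := finPD_mvPowerSeries (ZMod p) d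
  refine ⟨IsLocalization.isNoetherianRing S (Localization S) inferInstance,
    ⟨d, (hR.localization S).globalDimLE⟩, fun M _ _ hfin hproj ↦ ?_⟩
  let _ : Module R M := Module.compHom M (algebraMap R (Localization S))
  have : IsScalarTower R (Localization S) M := IsScalarTower.of_algebraMap_smul fun _ _ ↦ rfl
  obtain ⟨N, hN, hl⟩ := exists_isLocalizedModule S M
  exact stablyFree_of_hasProjectiveDimensionLE S d N M N.subtype (hR (ModuleCat.of R N) hN)
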